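/- Define â_n as in the integral recursion â_0(x,y) = Φ(x,y), â_n(x,y) = −∫_0^1 s^{n−1} Φ(x, y+s(x−y)) (A â_{n−1}(·,y))(y+s(x−y)) ds. Then for all x ∈ ℝ^d the first two diagonal heat-kernel coefficients are â_1(x,x) = v(x) and â_2(x,x) = (1/2) v(x)² + (1/12) Σ_{μ,ν} F_{μν}(x) F_{μν}(x) + (1/6) Σ_μ ∇_μ ∇_μ v(x). -/

import Mathlib

/-!
Fix the base point `y` and use `U = Φ(·, y)` as a gauge transformation near `y`. Since `Φ` solves the
transport equation along rays from `y`, the transformed connection `b = U⁻¹ (∂ + B) U` is in radial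
(Fock-Schwinger) gauge, `(x - y)^μ b_μ(x) = 0` (`radial_gaugeB`). Let `u = U⁻¹ v U`.

Differentiating the radial condition at `y` gives `b_μ = 0`, `∂_μ b_ν + ∂_ν b_μ = 0` and
`Σ_{μν} ∂_μ ∂_μ ∂_ν b_ν = 0` (`radial_one`, `radial_two`, `radial_four`). Hence at `y` the field
strength of `b` is `2 ∂_μ b_ν`, and the operators `A` and `Σ_μ ∇_μ ∇_μ` reduce to their flat
counterparts (`Fstr_base`, `lapA_base`, `nab_base`).

By gauge covariance (`lapA_gauge`), `A Φ(·, y) = -U w` with the source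
`w = Σ_μ (∂_μ b_μ + b_μ²) + u`. The composition law `Φ(x, z) Φ(z, y) = Φ(x, y)` for `z` on the segment
from `y` to `x` (`transport_mul`) then turns the recursion into
`â_1(x, y) = U(x) ∫₀¹ w(y + s (x - y)) ds` for `x` near `y` (`acoef_one_gauge`). Evaluation at `x = y`
gives `â_1(y, y) = w(y) = v(y)`. For the second coefficient,
`â_2(y, y) = ½ (Σ_μ ∂_μ ∂_μ + u) ∫₀¹ w(y + s (x - y)) ds` at `x = y`, that is
`½ v² + (1/6) Σ_μ ∂_μ ∂_μ w`, and `Σ_μ ∂_μ ∂_μ w = ½ Σ_{μν} F_{μν}² + Σ_μ ∇_μ ∇_μ v` at `y`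
(`laplace_source`).

Two analytic facts are needed for this computation. The map `Φ(·, y)` is smooth near `y`: the
transport equation is a linear equation `(1 - J C(x)) p = 1` in the Banach space of continuous paths,
`C(x)` is smooth in `x` with `C(y) = 0`, and inversion of operators is smooth
(`contDiffOn_linear_ode`). The averages over segments are smooth and may be differentiated under the
integral sign (`CPath.contDiff_integral`, `CPath.fderiv_integral_apply`). Cutting off by a bump
function (`exists_global_frame`) replaces `Φ(·, y)` and its inverse by globally smooth maps, so that
all further calculus is done with globally smooth functions.
-/

/- STATEMENT 14: the first two diagonal heat-kernel coefficients:
`â_1(x,x) = v(x)` and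
`â_2(x,x) = (1/2)v(x)² + (1/12)Σ_{μν} F_{μν}F_{μν} + (1/6)Σ_μ ∇_μ∇_μ v(x)`. -/

attribute [local instance] Matrix.normedAddCommGroup Matrix.normedSpace

/-- Partial derivative in the `μ`-th coordinate direction. -/
noncomputable def pd {d m : ℕ} (μ : Fin d)
    (g : EuclideanSpace ℝ (Fin d) → Matrix (Fin m) (Fin m) ℂ) :
    EuclideanSpace ℝ (Fin d) → Matrix (Fin m) (Fin m) ℂ :=
  fun x => fderiv ℝ g x (EuclideanSpace.single μ 1)

/-- The field strength `F_{μν} = ∂_μ B_ν − ∂_ν B_μ + [B_μ, B_ν]`. -/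
noncomputable def Fstr {d m : ℕ}
    (B : Fin d → EuclideanSpace ℝ (Fin d) → Matrix (Fin m) (Fin m) ℂ)
    (μ ν : Fin d) : EuclideanSpace ℝ (Fin d) → Matrix (Fin m) (Fin m) ℂ :=
  fun x => pd μ (B ν) x - pd ν (B μ) x + (B μ x * B ν x - B ν x * B μ x)

/-- The adjoint covariant derivative `∇_μ g = ∂_μ g + [B_μ, g]`. -/
noncomputable def nab {d m : ℕ}
    (B : Fin d → EuclideanSpace ℝ (Fin d) → Matrix (Fin m) (Fin m) ℂ)
    (μ : Fin d) (g : EuclideanSpace ℝ (Fin d) → Matrix (Fin m) (Fin m) ℂ) :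
    EuclideanSpace ℝ (Fin d) → Matrix (Fin m) (Fin m) ℂ :=
  fun x => pd μ g x + (B μ x * g x - g x * B μ x)

/-- The covariant derivative `D_μ h = ∂_μ h + B_μ h`. -/
noncomputable def covD {d m : ℕ}
    (B : Fin d → EuclideanSpace ℝ (Fin d) → Matrix (Fin m) (Fin m) ℂ)
    (μ : Fin d) (h : EuclideanSpace ℝ (Fin d) → Matrix (Fin m) (Fin m) ℂ) :
    EuclideanSpace ℝ (Fin d) → Matrix (Fin m) (Fin m) ℂ :=
  fun x => fderiv ℝ h x (EuclideanSpace.single μ 1) + B μ x * h x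

/-- The Laplace-type operator `A = −Σ_μ D_μ D_μ − v`. -/
noncomputable def lapA {d m : ℕ}
    (B : Fin d → EuclideanSpace ℝ (Fin d) → Matrix (Fin m) (Fin m) ℂ)
    (v : EuclideanSpace ℝ (Fin d) → Matrix (Fin m) (Fin m) ℂ)
    (h : EuclideanSpace ℝ (Fin d) → Matrix (Fin m) (Fin m) ℂ) :
    EuclideanSpace ℝ (Fin d) → Matrix (Fin m) (Fin m) ℂ :=
  fun x => -∑ μ, covD B μ (covD B μ h) x - v x * h x

/-- The heat-kernel coefficients, defined by the integral recursion. -/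
noncomputable def acoef {d m : ℕ}
    (B : Fin d → EuclideanSpace ℝ (Fin d) → Matrix (Fin m) (Fin m) ℂ)
    (v : EuclideanSpace ℝ (Fin d) → Matrix (Fin m) (Fin m) ℂ)
    (Φ : EuclideanSpace ℝ (Fin d) → EuclideanSpace ℝ (Fin d) →
      Matrix (Fin m) (Fin m) ℂ) :
    ℕ → EuclideanSpace ℝ (Fin d) → EuclideanSpace ℝ (Fin d) →
      Matrix (Fin m) (Fin m) ℂ
  | 0 => fun x y => Φ x y
  | k + 1 => fun x y =>
      -∫ s in (0:ℝ)..1, s ^ k •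
        (Φ x (y + s • (x - y)) *
          lapA B v (fun x' => acoef B v Φ k x' y) (y + s • (x - y)))

open scoped ContDiff

/-! ### The Banach space of paths and linear equations with parameters -/

open unitInterval
open scoped BoundedContinuousFunction

/-- The Banach space of continuous paths `[0,1] → W`. It is a plain definition, not an abbreviation,
so that its topology and module structure come only from its normed space structure. -/
def CPath (W : Type) [NormedAddCommGroup W] : Type := I →ᵇ W

namespace CPath

variable {E W : Type} [NormedAddCommGroup E] [NormedAddCommGroup W]

noncomputable instance : NormedAddCommGroup (CPath W) :=
  inferInstanceAs (NormedAddCommGroup (I →ᵇ W))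

noncomputable instance [NormedSpace ℝ W] : NormedSpace ℝ (CPath W) :=
  inferInstanceAs (NormedSpace ℝ (I →ᵇ W))

instance [CompleteSpace W] : CompleteSpace (CPath W) :=
  inferInstanceAs (CompleteSpace (I →ᵇ W))

instance : CoeFun (CPath W) (fun _ => I → W) := ⟨fun f => (f : I →ᵇ W).toFun⟩

/-- The path with a given continuous underlying function. -/
def of (f : I → W) (hf : Continuous f) : CPath W :=
  BoundedContinuousFunction.mkOfCompact ⟨f, hf⟩

theorem of_apply (f : I → W) (hf : Continuous f) (t : I) : of f hf t = f t := rfl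

theorem cont (f : CPath W) : Continuous f := BoundedContinuousFunction.continuous (α := I) f

theorem ext {f g : CPath W} (h : ∀ t, f t = g t) : f = g :=
  BoundedContinuousFunction.ext (f := (f : I →ᵇ W)) h

theorem add_apply (f g : CPath W) (t : I) : (f + g) t = f t + g t := rfl

theorem smul_apply [NormedSpace ℝ W] (c : ℝ) (f : CPath W) (t : I) : (c • f) t = c • f t := rfl

theorem norm_le {f : CPath W} {c : ℝ} (hc : 0 ≤ c) : ‖f‖ ≤ c ↔ ∀ t, ‖f t‖ ≤ c :=
  BoundedContinuousFunction.norm_le (f := (f : I →ᵇ W)) hc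

theorem norm_apply_le (f : CPath W) (t : I) : ‖f t‖ ≤ ‖f‖ :=
  BoundedContinuousFunction.norm_coe_le_norm (f : I →ᵇ W) t

/-- A map `E × ℝ → W` seen as a family of paths parametrized by `E`. -/
noncomputable def curry (G : E × ℝ → W) (hG : Continuous G) (x : E) : CPath W :=
  of (fun s => G (x, s)) (by fun_prop)

theorem continuous_curry (G : E × ℝ → W) (hG : Continuous G) : Continuous (curry G hG) := by
  have : Continuous (fun p : E × I => G (p.1, (p.2 : ℝ))) := by fun_prop
  have h := (ContinuousMap.isUniformEmbedding_equivBoundedOfCompact I W).uniformContinuous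
  exact h.continuous.comp
    (ContinuousMap.curry ⟨_, this⟩).continuous

variable [NormedSpace ℝ W]

/-- Pointwise application of a path of operators to a path of vectors, as a bilinear map. -/
noncomputable def applyL (E W : Type) [NormedAddCommGroup E] [NormedSpace ℝ E]
    [NormedAddCommGroup W] [NormedSpace ℝ W] :
    CPath (E →L[ℝ] W) →L[ℝ] CPath E →L[ℝ] CPath W :=
  LinearMap.mkContinuous₂
    (LinearMap.mk₂ ℝ (fun (f : CPath (E →L[ℝ] W)) (g : CPath E) =>
        of (fun t => f t (g t)) (f.cont.clm_apply g.cont))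
      (fun _ _ _ => ext fun t => by simp [of_apply, add_apply])
      (fun _ _ _ => ext fun t => by simp [of_apply, smul_apply])
      (fun _ _ _ => ext fun t => by simp [of_apply, add_apply])
      (fun _ _ _ => ext fun t => by simp [of_apply, smul_apply])) 1
    (fun f g => by
      rw [one_mul, norm_le (by positivity)]
      intro t
      exact ((f t).le_opNorm _).trans (by gcongr <;> exact norm_apply_le _ t))

/-- Constant paths. -/
noncomputable def constL (E : Type) [NormedAddCommGroup E] [NormedSpace ℝ E] :
    E →L[ℝ] CPath E :=
  LinearMap.mkContinuous
    { toFun := fun v => of (fun _ => v) continuous_const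
      map_add' := fun _ _ => rfl
      map_smul' := fun _ _ => rfl } 1
    (fun v => by
      rw [one_mul, norm_le (by positivity)]
      intro t; rfl)

/-- Evaluation of paths at time `t`. -/
noncomputable def evalL (W : Type) [NormedAddCommGroup W] [NormedSpace ℝ W] (t : I) :
    CPath W →L[ℝ] W :=
  LinearMap.mkContinuous
    { toFun := fun f => f t
      map_add' := fun _ _ => rfl
      map_smul' := fun _ _ => rfl } 1
    (fun f => by rw [one_mul]; exact norm_apply_le f t)

/-- The Volterra operator `f ↦ ∫₀ᵗ f`. -/
noncomputable def primL (W : Type) [NormedAddCommGroup W] [NormedSpace ℝ W] :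
    CPath W →L[ℝ] CPath W :=
  LinearMap.mkContinuous
    { toFun := fun f => of (fun t => ∫ s in (0:ℝ)..t, Set.IccExtend zero_le_one f s) (by
        have h : Continuous (Set.IccExtend zero_le_one f) := f.cont.Icc_extend'
        exact (intervalIntegral.continuous_primitive (fun a b => h.intervalIntegrable a b) 0).comp
          continuous_subtype_val)
      map_add' := fun f g => ext fun t =>
        intervalIntegral.integral_add (f.cont.Icc_extend'.intervalIntegrable _ _)
          (g.cont.Icc_extend'.intervalIntegrable _ _)
      map_smul' := fun c f => ext fun t => intervalIntegral.integral_smul c _ } 1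
    (fun f => by
      rw [one_mul, norm_le (by positivity)]
      intro t
      refine (intervalIntegral.norm_integral_le_of_norm_le_const (C := ‖f‖)
        (fun s _ => f.norm_apply_le _)).trans ?_
      have := t.2.1
      have := t.2.2
      rw [sub_zero, abs_of_nonneg t.2.1]
      nlinarith [norm_nonneg f])

/-- The integral over `[0,1]`, as a continuous linear functional on paths. -/
noncomputable def integralL (W : Type) [NormedAddCommGroup W] [NormedSpace ℝ W] : CPath W →L[ℝ] W :=
  (evalL W 1).comp (primL W)

theorem integralL_curry (G : E × ℝ → W) (hG : Continuous G) (x : E) :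
    integralL W (curry G hG x) = ∫ s in (0:ℝ)..1, G (x, s) := by
  change ∫ s in (0:ℝ)..1, Set.IccExtend zero_le_one (curry G hG x) s = _
  refine intervalIntegral.integral_congr fun s hs => ?_
  rw [Set.uIcc_of_le zero_le_one] at hs
  rw [Set.IccExtend_of_mem _ _ hs]
  rfl

variable [NormedSpace ℝ E]

/-- Differentiation in the parameter may be done pointwise in time: the mean value inequality makes
the remainder uniform in `s`, because the derivative is a continuous family of paths. -/
theorem hasFDerivAt_curry (G : E × ℝ → W) (hG : Continuous G)
    (G' : E × ℝ → E →L[ℝ] W) (hG' : Continuous G')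
    (h : ∀ x s, HasFDerivAt (fun x => G (x, s)) (G' (x, s)) x) (x : E) :
    HasFDerivAt (curry G hG) ((applyL E W (curry G' hG' x)).comp (constL E)) x := by
  rw [hasFDerivAt_iff_isLittleO, Asymptotics.isLittleO_iff]
  intro ε hε
  have hc := (continuous_curry G' hG').continuousAt (x := x)
  obtain ⟨δ, hδ, hb⟩ := Metric.continuousAt_iff.1 hc ε hε
  filter_upwards [Metric.ball_mem_nhds x hδ] with z hz
  rw [norm_le (by positivity)]
  intro s
  exact (convex_ball x δ).norm_image_sub_le_of_norm_hasFDerivWithin_le'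
    (f := fun x => G (x, s)) (f' := fun x => G' (x, s)) (φ := G' (x, s)) (C := ε)
    (fun u _ => (h u s).hasFDerivWithinAt)
    (fun u hu => by
      have h1 := (hb hu).le
      rw [dist_eq_norm] at h1
      exact (norm_apply_le (curry G' hG' u - curry G' hG' x) s).trans h1)
    (Metric.mem_ball_self hδ) hz

/-- A smooth family of functions of `s ∈ [0,1]` is a smooth map into the path space. The induction
on the order of smoothness has to range over all targets `W`, since the derivative takes values in
operators. -/
theorem contDiff_curry (n : ℕ) :
    ∀ {W : Type} [NormedAddCommGroup W] [NormedSpace ℝ W] (G : E × ℝ → W)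
    (hG : ContDiff ℝ ∞ G), ContDiff ℝ n (curry G hG.continuous) := by
  induction n with
  | zero => intro W _ _ G hG; exact contDiff_zero.2 (continuous_curry _ _)
  | succ n ih =>
    intro W _ _ G hG
    have hG' : ContDiff ℝ ∞ (fun p : E × ℝ => (fderiv ℝ G p).comp (ContinuousLinearMap.inl ℝ E ℝ)) :=
      (hG.fderiv_right (m := ∞) (by simp)).clm_comp contDiff_const
    have hd := hasFDerivAt_curry G hG.continuous _ hG'.continuous (fun x s => by
      have h1 := (hG.differentiable (by simp) (x, s)).hasFDerivAt
      exact h1.comp x (hasFDerivAt_prodMk_left x s))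
    push_cast
    rw [contDiff_succ_iff_hasFDerivAt]
    refine ⟨_, ?_, hd⟩
    have h2 : ContDiff ℝ n (fun x => applyL E W (curry _ hG'.continuous x)) :=
      (applyL E W).contDiff.comp (ih _ hG')
    exact h2.clm_comp contDiff_const

theorem contDiff_integral (G : E × ℝ → W) (hG : ContDiff ℝ ∞ G) :
    ContDiff ℝ ∞ (fun x => ∫ s in (0:ℝ)..1, G (x, s)) := by
  have h : ContDiff ℝ ∞ (curry G hG.continuous) := contDiff_infty.2 fun n => contDiff_curry n G hG
  have h2 : ContDiff ℝ ∞ (fun x => integralL W (curry G hG.continuous x)) :=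
    (integralL W).contDiff.comp h
  simpa only [integralL_curry] using h2

theorem fderiv_integral_apply (G : E × ℝ → W) (hG : Continuous G)
    (G' : E × ℝ → E →L[ℝ] W) (hG' : Continuous G')
    (h : ∀ x s, HasFDerivAt (fun x => G (x, s)) (G' (x, s)) x) (x e : E) :
    fderiv ℝ (fun x => ∫ s in (0:ℝ)..1, G (x, s)) x e = ∫ s in (0:ℝ)..1, G' (x, s) e := by
  have h1 := (integralL W).hasFDerivAt.comp x (hasFDerivAt_curry G hG G' hG' h x)
  have h2 : (fun x => ∫ s in (0:ℝ)..1, G (x, s)) = integralL W ∘ curry G hG := by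
    ext x; exact (integralL_curry G hG x).symm
  rw [h2, h1.fderiv]
  exact integralL_curry (fun p : E × ℝ => G' p e) (by fun_prop) x

end CPath

/-- Solutions at time `1` of a linear ODE `p' = C(x, s) p` depend smoothly on the parameter `x` near
a parameter `y` for which `C(y, ·) = 0`: in integrated form the equation reads `(1 - J C(x)) p = w`
with `J` the Volterra operator, and inversion is smooth on the open set of invertible operators. -/
theorem contDiffOn_linear_ode {E W : Type} [NormedAddCommGroup E] [NormedSpace ℝ E]
    [NormedAddCommGroup W] [NormedSpace ℝ W] [CompleteSpace W]
    (C : E × ℝ → W →L[ℝ] W) (hC : ContDiff ℝ ∞ C) (y : E) (hy : ∀ s, C (y, s) = 0)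
    (p : E → ℝ → W) (w : W) (hp0 : ∀ x, p x 0 = w)
    (hp : ∀ x, ∀ s ∈ Set.Icc (0:ℝ) 1,
      HasDerivWithinAt (p x) (C (x, s) (p x s)) (Set.Icc (0:ℝ) 1) s) :
    ∃ S : Set E, IsOpen S ∧ y ∈ S ∧ ContDiffOn ℝ ∞ (fun x => p x 1) S := by
  set c : E → CPath (W →L[ℝ] W) := CPath.curry C hC.continuous with hc
  have hcs : ContDiff ℝ ∞ c := contDiff_infty.2 fun n => CPath.contDiff_curry n C hC
  set A : E → CPath W →L[ℝ] CPath W := fun x =>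
    1 - (CPath.primL W).comp (CPath.applyL W W (c x)) with hA
  have hAs : ContDiff ℝ ∞ A :=
    contDiff_const.sub (contDiff_const.clm_comp ((CPath.applyL W W).contDiff.comp hcs))
  have hpc : ∀ x, ContinuousOn (p x) (Set.Icc 0 1) := fun x s hs => (hp x s hs).continuousWithinAt
  set F : E → CPath W := fun x => CPath.of (fun s => p x s) (hpc x).domRestrict with hF
  have hAF : ∀ x, A x (F x) = CPath.constL W w := by
    intro x
    refine CPath.ext fun t => ?_
    have hcont : Continuous (Set.IccExtend (zero_le_one (α := ℝ)) (CPath.applyL W W (c x) (F x))) :=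
      (CPath.applyL W W (c x) (F x)).cont.Icc_extend'
    have : ∫ s in (0:ℝ)..t, Set.IccExtend (zero_le_one (α := ℝ)) (CPath.applyL W W (c x) (F x)) s
        = p x t - p x 0 := by
      refine intervalIntegral.integral_eq_sub_of_hasDerivAt_of_le t.2.1
        ((hpc x).mono (Set.Icc_subset_Icc_right t.2.2)) ?_ (hcont.intervalIntegrable _ _)
      intro s hs
      have hs' : s ∈ Set.Icc (0:ℝ) 1 := ⟨hs.1.le, hs.2.le.trans t.2.2⟩
      rw [Set.IccExtend_of_mem _ _ hs']
      exact (hp x s hs').hasDerivAt (Icc_mem_nhds hs.1 (hs.2.trans_le t.2.2))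
    -- `erw` identifies the integrand inside `primL` with the one in `this`
    change p x t - ∫ s in (0:ℝ)..t, _ = w
    erw [this]
    rw [hp0]; abel
  refine ⟨A ⁻¹' {a | IsUnit a}, Units.isOpen.preimage hAs.continuous, ?_, ?_⟩
  · have : c y = 0 := CPath.ext fun s => hy s
    simp [hA, this]
  · intro x hx
    have h1 : ∀ z ∈ A ⁻¹' {a | IsUnit a},
        p z 1 = CPath.evalL W 1 (Ring.inverse (A z) (CPath.constL W w)) := by
      intro z hz
      rw [← hAF z, ← mul_apply_eq_comp, Ring.inverse_mul_cancel _ hz]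
      rfl
    refine ContDiffWithinAt.congr ?_ h1 (h1 x hx)
    obtain ⟨u, hu⟩ := hx
    have h2 : ContDiffAt ℝ ∞ (fun z => Ring.inverse (A z)) x := by
      refine ContDiffAt.comp (g := Ring.inverse) x ?_ hAs.contDiffAt
      rw [← hu]
      exact contDiffAt_ringInverse ℝ u
    have h3 : ContDiffAt ℝ ∞ (fun z => Ring.inverse (A z) (CPath.constL W w)) x :=
      h2.clm_apply contDiffAt_const
    exact ((CPath.evalL W 1).contDiff.contDiffAt.comp x h3).contDiffWithinAt

/-- Uniqueness for linear equations: on the compact interval the generator is bounded, so the right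
hand side is uniformly Lipschitz. -/
theorem linear_ode_unique {W : Type} [NormedAddCommGroup W] [NormedSpace ℝ W]
    (C : ℝ → W →L[ℝ] W) (hC : Continuous C) (f g : ℝ → W)
    (hf : ∀ s ∈ Set.Icc (0:ℝ) 1, HasDerivWithinAt f (C s (f s)) (Set.Icc (0:ℝ) 1) s)
    (hg : ∀ s ∈ Set.Icc (0:ℝ) 1, HasDerivWithinAt g (C s (g s)) (Set.Icc (0:ℝ) 1) s)
    (h0 : f 0 = g 0) : Set.EqOn f g (Set.Icc 0 1) := by
  obtain ⟨k, hk⟩ := isCompact_Icc.exists_bound_of_continuousOn (s := Set.Icc (0:ℝ) 1) hC.continuousOn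
  have key : ∀ f : ℝ → W, (∀ s ∈ Set.Icc (0:ℝ) 1,
      HasDerivWithinAt f (C s (f s)) (Set.Icc (0:ℝ) 1) s) →
      ∀ s ∈ Set.Ico (0:ℝ) 1, HasDerivWithinAt f (C s (f s)) (Set.Ici s) s := fun f hf s hs =>
    (hf s ⟨hs.1, hs.2.le⟩).mono_of_mem_nhdsWithin
      (Filter.mem_of_superset (Icc_mem_nhdsGE hs.2) (Set.Icc_subset_Icc_left hs.1))
  refine ODE_solution_unique_of_mem_Icc_right (v := fun s w => C s w) (s := fun _ => Set.univ)
    (K := k.toNNReal) ?_ (fun s hs => (hf s hs).continuousWithinAt) (key f hf) (by simp)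
    (fun s hs => (hg s hs).continuousWithinAt) (key g hg) (by simp) h0
  intro s hs
  refine (((C s).lipschitz).weaken ?_).lipschitzOnWith
  rw [← NNReal.coe_le_coe]
  exact (hk s ⟨hs.1, hs.2.le⟩).trans (Real.le_coe_toNNReal _)

/-- The space `ℝ^d`. -/
abbrev Vec (d : ℕ) : Type := EuclideanSpace ℝ (Fin d)

/-- The matrix algebra `M_m(ℂ)`. -/
abbrev Mat (m : ℕ) : Type := Matrix (Fin m) (Fin m) ℂ

/-- Matrix multiplication as a continuous bilinear map. -/
noncomputable def mulL (m : ℕ) : Mat m →L[ℝ] Mat m →L[ℝ] Mat m :=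
  LinearMap.toContinuousLinearMap
    ((LinearMap.toContinuousLinearMap : (Mat m →ₗ[ℝ] Mat m) ≃ₗ[ℝ] _).toLinearMap ∘ₗ
      LinearMap.mul ℝ (Mat m))

theorem mulL_apply {m : ℕ} (a b : Mat m) : mulL m a b = a * b := rfl

/-! ### Calculus of the partial derivatives `pd` -/

section generic

variable {E W : Type} [NormedAddCommGroup E] [NormedSpace ℝ E] [NormedAddCommGroup W]
  [NormedSpace ℝ W]

/- The lemmas of this section are stated for an abstract normed space `W` because `Mat m` carries
a topology and a module structure both as a matrix space and through the chosen norm; these agree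
only after unfolding, which blocks rewriting when one works in `Mat m` directly. -/

theorem contDiff_bilin (T : W →L[ℝ] W →L[ℝ] W) {f g : E → W} (hf : ContDiff ℝ ∞ f)
    (hg : ContDiff ℝ ∞ g) : ContDiff ℝ ∞ (fun x => T (f x) (g x)) :=
  (T.contDiff.comp hf).clm_apply hg

theorem fderiv_add_apply {f g : E → W} (hf : ContDiff ℝ ∞ f) (hg : ContDiff ℝ ∞ g) (x e : E) :
    fderiv ℝ (fun x => f x + g x) x e = fderiv ℝ f x e + fderiv ℝ g x e := by
  rw [fderiv_fun_add (hf.differentiable (by simp) x) (hg.differentiable (by simp) x)]; rfl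

theorem fderiv_sub_apply {f g : E → W} (hf : ContDiff ℝ ∞ f) (hg : ContDiff ℝ ∞ g) (x e : E) :
    fderiv ℝ (fun x => f x - g x) x e = fderiv ℝ f x e - fderiv ℝ g x e := by
  rw [fderiv_fun_sub (hf.differentiable (by simp) x) (hg.differentiable (by simp) x)]; rfl

theorem fderiv_sum_apply {d : ℕ} {f : Fin d → E → W} (hf : ∀ i, ContDiff ℝ ∞ (f i)) (x e : E) :
    fderiv ℝ (fun x => ∑ i, f i x) x e = ∑ i, fderiv ℝ (f i) x e := by
  rw [fderiv_fun_sum (fun i _ => (hf i).differentiable (by simp) x)]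
  simp

theorem fderiv_fderiv_comm {f : E → W} (hf : ContDiff ℝ ∞ f) (a b x : E) :
    fderiv ℝ (fun x => fderiv ℝ f x b) x a = fderiv ℝ (fun x => fderiv ℝ f x a) x b := by
  have key : ∀ a b : E, fderiv ℝ (fun x => fderiv ℝ f x b) x a =
      fderiv ℝ (fderiv ℝ f) x a b := by
    intro a b
    have h1 : DifferentiableAt ℝ (fderiv ℝ f) x :=
      (hf.fderiv_right (m := ∞) (by simp)).differentiable (by simp) x
    rw [(h1.hasFDerivAt.clm_apply (hasFDerivAt_const b x)).fderiv]
    simp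
  have hs : IsSymmSndFDerivAt ℝ f x := hf.contDiffAt.isSymmSndFDerivAt (by
    simp only [minSmoothness_of_isRCLikeNormedField]; exact ENat.LEInfty.out)
  rw [key, key, hs.eq]

theorem fderiv_radial {d : ℕ} {c : Fin d → EuclideanSpace ℝ (Fin d) → W}
    (hc : ∀ μ, ContDiff ℝ ∞ (c μ)) (y x : EuclideanSpace ℝ (Fin d)) (ν : Fin d) :
    fderiv ℝ (fun x => ∑ μ, (x μ - y μ) • c μ x) x (EuclideanSpace.single ν 1) =
      c ν x + ∑ μ, (x μ - y μ) • fderiv ℝ (c μ) x (EuclideanSpace.single ν 1) := by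
  have hco : ∀ μ : Fin d, HasFDerivAt (fun x : EuclideanSpace ℝ (Fin d) => x μ - y μ)
      (EuclideanSpace.proj μ : EuclideanSpace ℝ (Fin d) →L[ℝ] ℝ) x := fun μ =>
    (EuclideanSpace.proj μ : EuclideanSpace ℝ (Fin d) →L[ℝ] ℝ).hasFDerivAt.sub_const _
  have h := HasFDerivAt.fun_sum (u := Finset.univ) fun μ (_ : μ ∈ Finset.univ) =>
      (hco μ).smul (((hc μ).differentiable (by simp) x).hasFDerivAt)
  have h2 : fderiv ℝ (fun x => ∑ μ, (x μ - y μ) • c μ x) x = _ := h.fderiv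
  rw [h2]
  simp [Finset.sum_add_distrib]
  rw [add_comm]

end generic

section calculus

variable {d m : ℕ} {x y : Vec d} {S : Set (Vec d)} {μ ν : Fin d}

theorem ContDiff.mat_mul {E : Type} [NormedAddCommGroup E] [NormedSpace ℝ E] {f g : E → Mat m}
    (hf : ContDiff ℝ ∞ f) (hg : ContDiff ℝ ∞ g) : ContDiff ℝ ∞ (fun x => f x * g x) :=
  contDiff_bilin (mulL m) hf hg

theorem contDiff_pd {f : Vec d → Mat m} (hf : ContDiff ℝ ∞ f) (μ : Fin d) :
    ContDiff ℝ ∞ (pd μ f) :=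
  (hf.fderiv_right (m := ∞) (by simp)).clm_apply contDiff_const

theorem ContDiff.diffAt {f : Vec d → Mat m} (hf : ContDiff ℝ ∞ f) (x : Vec d) :
    DifferentiableAt ℝ f x := hf.differentiable (by simp) x

theorem pd_mul {f g : Vec d → Mat m} (hf : ContDiff ℝ ∞ f) (hg : ContDiff ℝ ∞ g) (x : Vec d) :
    pd μ (fun x => f x * g x) x = pd μ f x * g x + f x * pd μ g x := by
  have h := (mulL m).hasFDerivAt_of_bilinear (hf.diffAt x).hasFDerivAt (hg.diffAt x).hasFDerivAt
  have h2 : fderiv ℝ (fun x => f x * g x) x = _ := h.fderiv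
  unfold pd
  rw [h2, add_comm]
  rfl

theorem pd_add {f g : Vec d → Mat m} (hf : ContDiff ℝ ∞ f) (hg : ContDiff ℝ ∞ g) (x : Vec d) :
    pd μ (fun x => f x + g x) x = pd μ f x + pd μ g x :=
  fderiv_add_apply hf hg x _

theorem pd_sub {f g : Vec d → Mat m} (hf : ContDiff ℝ ∞ f) (hg : ContDiff ℝ ∞ g) (x : Vec d) :
    pd μ (fun x => f x - g x) x = pd μ f x - pd μ g x :=
  fderiv_sub_apply hf hg x _

theorem pd_sum {f : Fin d → Vec d → Mat m} (hf : ∀ i, ContDiff ℝ ∞ (f i)) (x : Vec d) :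
    pd μ (fun x => ∑ i, f i x) x = ∑ i, pd μ (f i) x :=
  fderiv_sum_apply hf x _

theorem pd_const (a : Mat m) : pd μ (fun _ : Vec d => a) = fun _ => 0 := by
  ext x : 1
  simp [pd]

theorem pd_comm {f : Vec d → Mat m} (hf : ContDiff ℝ ∞ f) (μ ν : Fin d) :
    pd μ (pd ν f) = pd ν (pd μ f) :=
  funext fun x => fderiv_fderiv_comm hf _ _ x

theorem pd_eqOn {f g : Vec d → Mat m} (hS : IsOpen S) (h : Set.EqOn f g S) :
    Set.EqOn (pd μ f) (pd μ g) S := fun x hx => by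
  unfold pd
  rw [(h.eventuallyEq_of_mem (hS.mem_nhds hx)).fderiv_eq]

theorem covD_eqOn {B : Fin d → Vec d → Mat m} {f g : Vec d → Mat m} (hS : IsOpen S)
    (h : Set.EqOn f g S) : Set.EqOn (covD B μ f) (covD B μ g) S := fun x hx => by
  have h1 : covD B μ f x = pd μ f x + B μ x * f x := rfl
  have h2 : covD B μ g x = pd μ g x + B μ x * g x := rfl
  rw [h1, h2, pd_eqOn hS h hx, h hx]

theorem lapA_eqOn {B : Fin d → Vec d → Mat m} {v f g : Vec d → Mat m} (hS : IsOpen S)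
    (h : Set.EqOn f g S) : Set.EqOn (lapA B v f) (lapA B v g) S := fun x hx => by
  unfold lapA
  rw [h hx]
  congr 2
  exact Finset.sum_congr rfl fun μ _ => covD_eqOn hS (covD_eqOn hS h) hx

theorem contDiff_covD {B : Fin d → Vec d → Mat m} {f : Vec d → Mat m} (hB : ContDiff ℝ ∞ (B μ))
    (hf : ContDiff ℝ ∞ f) : ContDiff ℝ ∞ (covD B μ f) :=
  (contDiff_pd hf μ).add (hB.mat_mul hf)

theorem contDiff_nab {B : Fin d → Vec d → Mat m} {f : Vec d → Mat m} (hB : ContDiff ℝ ∞ (B μ))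
    (hf : ContDiff ℝ ∞ f) : ContDiff ℝ ∞ (nab B μ f) :=
  (contDiff_pd hf μ).add ((hB.mat_mul hf).sub (hf.mat_mul hB))

end calculus

/-! ### Gauge covariance -/

section gauge

variable {d m : ℕ} {x y : Vec d} {S : Set (Vec d)} {μ ν : Fin d}

/-- The gauge transform `U⁻¹ (B_μ U + ∂_μ U)` of the connection `B`, where `V` plays the role
of `U⁻¹`. -/
noncomputable def gaugeB (B : Fin d → Vec d → Mat m) (U V : Vec d → Mat m) :
    Fin d → Vec d → Mat m := fun μ x => V x * covD B μ U x

/-- The gauge transform `U⁻¹ g U` of a field `g` in the adjoint representation. -/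
noncomputable def gaugeAd (U V g : Vec d → Mat m) : Vec d → Mat m := fun x => V x * g x * U x

variable {B : Fin d → Vec d → Mat m} {U V v : Vec d → Mat m}

theorem contDiff_gaugeB (hB : ∀ μ, ContDiff ℝ ∞ (B μ)) (hU : ContDiff ℝ ∞ U)
    (hV : ContDiff ℝ ∞ V) (μ : Fin d) : ContDiff ℝ ∞ (gaugeB B U V μ) :=
  hV.mat_mul (contDiff_covD (hB μ) hU)

theorem contDiff_gaugeAd (hv : ContDiff ℝ ∞ v) (hU : ContDiff ℝ ∞ U)
    (hV : ContDiff ℝ ∞ V) : ContDiff ℝ ∞ (gaugeAd U V v) :=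
  (hV.mat_mul hv).mat_mul hU

theorem mul_gaugeB (hUV : ∀ x ∈ S, U x * V x = 1) (hx : x ∈ S) :
    U x * gaugeB B U V μ x = covD B μ U x := by
  rw [gaugeB, ← mul_assoc, hUV x hx, one_mul]

theorem mul_gaugeAd (hUV : ∀ x ∈ S, U x * V x = 1) {g : Vec d → Mat m} :
    Set.EqOn (fun x => g x * U x) (fun x => U x * gaugeAd U V g x) S := fun x hx => by
  simp only [gaugeAd]
  rw [← mul_assoc, ← mul_assoc, hUV x hx, one_mul]

/-- Gauge covariance of the covariant derivative. -/
theorem covD_gauge (hS : IsOpen S) (hU : ContDiff ℝ ∞ U) (hUV : ∀ x ∈ S, U x * V x = 1)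
    {f h : Vec d → Mat m} (hh : ContDiff ℝ ∞ h) (hf : Set.EqOn f (fun x => U x * h x) S) :
    Set.EqOn (covD B μ f) (fun x => U x * covD (gaugeB B U V) μ h x) S := fun x hx => by
  rw [covD_eqOn hS hf hx]
  change pd μ (fun x => U x * h x) x + B μ x * (U x * h x) =
    U x * (pd μ h x + gaugeB B U V μ x * h x)
  rw [pd_mul hU hh, mul_add, ← mul_assoc (U x), mul_gaugeB hUV hx]
  change _ = _ + (pd μ U x + B μ x * U x) * h x
  noncomm_ring

/-- Gauge covariance of the operator `A`. -/
theorem lapA_gauge (hS : IsOpen S) (hB : ∀ μ, ContDiff ℝ ∞ (B μ)) (hU : ContDiff ℝ ∞ U)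
    (hV : ContDiff ℝ ∞ V) (hUV : ∀ x ∈ S, U x * V x = 1)
    {f h : Vec d → Mat m} (hh : ContDiff ℝ ∞ h) (hf : Set.EqOn f (fun x => U x * h x) S) :
    Set.EqOn (lapA B v f) (fun x => U x * lapA (gaugeB B U V) (gaugeAd U V v) h x) S :=
  fun x hx => by
  have h1 : ∀ μ, covD B μ (covD B μ f) x =
      U x * covD (gaugeB B U V) μ (covD (gaugeB B U V) μ h) x := fun μ =>
    covD_gauge hS hU hUV (contDiff_covD (contDiff_gaugeB hB hU hV μ) hh)
      (covD_gauge hS hU hUV hh hf) hx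
  have h2 : v x * U x = U x * gaugeAd U V v x := mul_gaugeAd hUV hx
  simp only [lapA, h1, hf hx]
  rw [← Finset.mul_sum, ← mul_assoc, h2, mul_sub, mul_neg, mul_assoc]

/-- Gauge covariance of the adjoint covariant derivative. -/
theorem nab_gauge (hS : IsOpen S) (hU : ContDiff ℝ ∞ U) (hUV : ∀ x ∈ S, U x * V x = 1)
    {g h : Vec d → Mat m} (hg : ContDiff ℝ ∞ g) (hh : ContDiff ℝ ∞ h)
    (hgh : Set.EqOn (fun x => g x * U x) (fun x => U x * h x) S) :
    Set.EqOn (fun x => nab B μ g x * U x) (fun x => U x * nab (gaugeB B U V) μ h x) S :=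
  fun x hx => by
  have h1 := covD_gauge (μ := μ) (B := B) hS hU hUV hh hgh hx
  have h2 : g x * U x = U x * h x := hgh hx
  have h3 : U x * gaugeB B U V μ x = pd μ U x + B μ x * U x := mul_gaugeB hUV hx
  change pd μ (fun x => g x * U x) x + B μ x * (g x * U x) =
    U x * (pd μ h x + gaugeB B U V μ x * h x) at h1
  rw [pd_mul hg hU] at h1
  change (pd μ g x + (B μ x * g x - g x * B μ x)) * U x =
    U x * (pd μ h x + (gaugeB B U V μ x * h x - h x * gaugeB B U V μ x))
  have h4 : U x * (pd μ h x + (gaugeB B U V μ x * h x - h x * gaugeB B U V μ x)) =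
      U x * (pd μ h x + gaugeB B U V μ x * h x) - (U x * h x) * gaugeB B U V μ x := by noncomm_ring
  rw [h4, ← h1, ← h2, mul_assoc (g x), h3]
  noncomm_ring

/-- Gauge covariance of the field strength, read off from `[D_μ, D_ν] = F_{μν}`. -/
theorem Fstr_gauge (hS : IsOpen S) (hB : ∀ μ, ContDiff ℝ ∞ (B μ)) (hU : ContDiff ℝ ∞ U)
    (hV : ContDiff ℝ ∞ V) (hUV : ∀ x ∈ S, U x * V x = 1) (hx : x ∈ S) :
    Fstr B μ ν x * U x = U x * Fstr (gaugeB B U V) μ ν x := by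
  have h1 : ∀ μ ν, covD B μ (covD B ν U) x =
      U x * covD (gaugeB B U V) μ (gaugeB B U V ν) x := fun μ ν =>
    covD_gauge hS hU hUV (contDiff_gaugeB hB hU hV ν) (fun x hx => (mul_gaugeB hUV hx).symm) hx
  have h2 : ∀ μ ν, covD B μ (covD B ν U) x = pd μ (pd ν U) x + pd μ (B ν) x * U x
      + B ν x * pd μ U x + B μ x * pd ν U x + B μ x * (B ν x * U x) := by
    intro μ ν
    change pd μ (fun x => pd ν U x + B ν x * U x) x + B μ x * (pd ν U x + B ν x * U x) = _
    rw [pd_add (contDiff_pd hU ν) ((hB ν).mat_mul hU), pd_mul (hB ν) hU]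
    noncomm_ring
  have h3 := congrArg₂ (· - ·) (h1 μ ν) (h1 ν μ)
  simp only [← mul_sub] at h3
  have h4 : covD (gaugeB B U V) μ (gaugeB B U V ν) x - covD (gaugeB B U V) ν (gaugeB B U V μ) x
      = Fstr (gaugeB B U V) μ ν x := by
    unfold Fstr covD pd; noncomm_ring
  rw [h4, h2, h2, pd_comm hU] at h3
  rw [← h3]
  unfold Fstr
  noncomm_ring

end gauge

/-! ### Consequences of the radial gauge condition -/

section radial

variable {d m : ℕ} {x y : Vec d} {S : Set (Vec d)} {μ ν : Fin d}

/-- The radial component `Σ_μ (x - y)^μ c_μ(x)` of a family `c`, relative to the base point `y`. -/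
noncomputable def radial (y : Vec d) (c : Fin d → Vec d → Mat m) : Vec d → Mat m :=
  fun x => ∑ μ, (x μ - y μ) • c μ x

/-- The commutator of `∂_ν` with the radial contraction is evaluation of the `ν`-th component. -/
theorem pd_radial {c : Fin d → Vec d → Mat m} (hc : ∀ μ, ContDiff ℝ ∞ (c μ)) (x : Vec d) :
    pd ν (radial y c) x = c ν x + radial y (fun μ => pd ν (c μ)) x :=
  fderiv_radial hc y x ν

theorem contDiff_radial {c : Fin d → Vec d → Mat m} (hc : ∀ μ, ContDiff ℝ ∞ (c μ)) :
    ContDiff ℝ ∞ (radial y c) :=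
  ContDiff.sum fun μ _ =>
    ((EuclideanSpace.proj μ : Vec d →L[ℝ] ℝ).contDiff.sub contDiff_const).smul (hc μ)

theorem radial_base (c : Fin d → Vec d → Mat m) : radial y c y = 0 := by simp [radial]

variable {c : Fin d → Vec d → Mat m}

/-- First-order consequence of the radial gauge condition. -/
theorem radial_one (hS : IsOpen S) (hy : y ∈ S) (hc : ∀ μ, ContDiff ℝ ∞ (c μ))
    (h0 : Set.EqOn (radial y c) (fun _ => 0) S) (ν : Fin d) : c ν y = 0 := by
  have h1 := pd_eqOn (μ := ν) hS h0 hy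
  rwa [pd_radial hc, radial_base, add_zero, pd_const] at h1

/-- Second-order consequence of the radial gauge condition: at the base point the Jacobian of `c` is
antisymmetric. -/
theorem radial_two (hS : IsOpen S) (hy : y ∈ S) (hc : ∀ μ, ContDiff ℝ ∞ (c μ))
    (h0 : Set.EqOn (radial y c) (fun _ => 0) S) (μ ν : Fin d) :
    pd μ (c ν) y + pd ν (c μ) y = 0 := by
  have h1 := pd_eqOn (μ := μ) hS (pd_eqOn (μ := ν) hS h0) hy
  simp only [pd_const] at h1
  have e1 : pd ν (radial y c) = fun x => c ν x + radial y (fun μ => pd ν (c μ)) x :=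
    funext fun x => pd_radial hc x
  have hc1 : ∀ κ, ContDiff ℝ ∞ (pd ν (c κ)) := fun κ => contDiff_pd (hc κ) ν
  rwa [e1, pd_add (hc ν) (contDiff_radial hc1), pd_radial hc1, radial_base, add_zero] at h1

/-- Fourth-order consequence of the radial gauge condition, contracted in pairs. At the base point
`∂_ν ∂_ν ∂_μ ∂_μ` of the radial component is
`2 ∂_ν ∂_ν ∂_μ c_μ + 2 ∂_μ ∂_μ ∂_ν c_ν`, and summation over `μ, ν` makes the two terms equal. -/
theorem radial_four (hS : IsOpen S) (hy : y ∈ S) (hc : ∀ μ, ContDiff ℝ ∞ (c μ))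
    (h0 : Set.EqOn (radial y c) (fun _ => 0) S) :
    ∑ μ, ∑ ν, pd μ (pd μ (pd ν (c ν))) y = 0 := by
  have key : ∀ μ ν, pd μ (pd μ (pd ν (c ν))) y + pd ν (pd ν (pd μ (c μ))) y = 0 := by
    intro μ ν
    have hp : ∀ {f : Vec d → Mat m}, ContDiff ℝ ∞ f → ∀ κ, ContDiff ℝ ∞ (pd κ f) :=
      fun hf κ => contDiff_pd hf κ
    have h1 := pd_eqOn (μ := ν) hS (pd_eqOn (μ := ν) hS (pd_eqOn (μ := μ) hS
      (pd_eqOn (μ := μ) hS h0))) hy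
    simp only [pd_const] at h1
    have e1 : pd μ (radial y c) = fun x => c μ x + radial y (fun κ => pd μ (c κ)) x :=
      funext fun x => pd_radial hc x
    have hc1 : ∀ κ, ContDiff ℝ ∞ (pd μ (c κ)) := fun κ => hp (hc κ) _
    have hc2 : ∀ κ, ContDiff ℝ ∞ (pd μ (pd μ (c κ))) := fun κ => hp (hc1 κ) _
    have hc3 : ∀ κ, ContDiff ℝ ∞ (pd ν (pd μ (pd μ (c κ)))) := fun κ => hp (hc2 κ) _
    have e2 : pd μ (pd μ (radial y c)) = fun x => (pd μ (c μ) x + pd μ (c μ) x)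
        + radial y (fun κ => pd μ (pd μ (c κ))) x := funext fun x => by
      rw [e1, pd_add (hc μ) (contDiff_radial hc1), pd_radial hc1, add_assoc]
    have e3 : pd ν (pd μ (pd μ (radial y c))) = fun x => (pd ν (pd μ (c μ)) x + pd ν (pd μ (c μ)) x)
        + pd μ (pd μ (c ν)) x
        + radial y (fun κ => pd ν (pd μ (pd μ (c κ)))) x := funext fun x => by
      rw [e2, pd_add ((hc1 μ).add (hc1 μ)) (contDiff_radial hc2), pd_add (hc1 μ) (hc1 μ),
        pd_radial hc2, ← add_assoc]
    have hb := hp (hc1 μ) ν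
    rw [e3, pd_add ((hb.add hb).add (hc2 ν)) (contDiff_radial hc3), pd_add (hb.add hb) (hc2 ν),
      pd_add hb hb, pd_radial hc3, radial_base] at h1
    have s1 : pd ν (pd μ (pd μ (c ν))) = pd μ (pd μ (pd ν (c ν))) := by
      rw [pd_comm (hp (hc ν) μ), pd_comm (hc ν)]
    rw [s1, add_zero] at h1
    have h2 : (2:ℝ) • (pd μ (pd μ (pd ν (c ν))) y + pd ν (pd ν (pd μ (c μ))) y) = 0 := by
      rw [← h1, two_smul]; abel
    exact (smul_eq_zero.1 h2).resolve_left two_ne_zero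
  have h2 : (2:ℝ) • ∑ μ, ∑ ν, pd μ (pd μ (pd ν (c ν))) y = 0 := by
    rw [two_smul]
    nth_rewrite 2 [Finset.sum_comm]
    simp only [← Finset.sum_add_distrib, key, Finset.sum_const_zero]
  exact (smul_eq_zero.1 h2).resolve_left two_ne_zero

end radial

/-! ### Averages along segments -/

section average

variable {E W : Type} [NormedAddCommGroup E] [NormedSpace ℝ E] [NormedAddCommGroup W]
  [NormedSpace ℝ W]

/-- The weighted average `∫₀¹ s^k w(y + s(x - y)) ds` of `w` along the segment from `y` to `x`. -/
noncomputable def avg (y : E) (k : ℕ) (w : E → W) : E → W :=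
  fun x => ∫ s in (0:ℝ)..1, s ^ k • w (y + s • (x - y))

theorem contDiff_avg (y : E) (k : ℕ) {w : E → W} (hw : ContDiff ℝ ∞ w) :
    ContDiff ℝ ∞ (avg y k w) := by
  refine CPath.contDiff_integral (fun p : E × ℝ => p.2 ^ k • w (y + p.2 • (p.1 - y))) ?_
  fun_prop

/-- Differentiating an average raises the weight. -/
theorem fderiv_avg (y : E) (k : ℕ) {w : E → W} (hw : ContDiff ℝ ∞ w) (x e : E) :
    fderiv ℝ (avg y k w) x e = avg y (k + 1) (fun x => fderiv ℝ w x e) x := by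
  have hw' : Continuous (fderiv ℝ w) := (hw.fderiv_right (m := ∞) (by simp)).continuous
  have h := CPath.fderiv_integral_apply (fun p : E × ℝ => p.2 ^ k • w (y + p.2 • (p.1 - y)))
    (by have := hw.continuous; fun_prop)
    (fun p : E × ℝ => p.2 ^ k • p.2 • fderiv ℝ w (y + p.2 • (p.1 - y)))
    (by fun_prop) (by
      intro x s
      have h1 : HasFDerivAt (fun x : E => y + s • (x - y)) (s • ContinuousLinearMap.id ℝ E) x :=
        (((hasFDerivAt_id x).sub_const y).const_smul s).const_add y
      have h2 := ((hw.differentiable (by simp) (y + s • (x - y))).hasFDerivAt.comp x h1).const_smul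
        (s ^ k)
      refine h2.congr_fderiv ?_
      ext e; simp) x e
  refine h.trans ?_
  simp [avg, pow_succ, smul_smul]

theorem avg_base [CompleteSpace W] (y : E) (k : ℕ) (w : E → W) :
    avg y k w y = (1 / ((k:ℝ) + 1)) • w y := by
  simp only [avg, sub_self, smul_zero, add_zero]
  rw [intervalIntegral.integral_smul_const, integral_pow]
  simp

end average

/-! ### Global extension of local frames -/

section frame

variable {E W : Type} [NormedAddCommGroup E] [NormedSpace ℝ E] [FiniteDimensional ℝ E]
  [NormedAddCommGroup W] [NormedSpace ℝ W]

/-- Cutting off by a bump function, a smooth germ extends to a globally smooth map. -/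
theorem exists_global_extension (f : E → W) {S : Set E} (hS : IsOpen S) {y : E} (hy : y ∈ S)
    (hf : ContDiffOn ℝ ∞ f S) :
    ∃ g : E → W, ContDiff ℝ ∞ g ∧ ∃ r > 0, Set.EqOn f g (Metric.ball y r) := by
  obtain ⟨ε, hε, hεS⟩ := Metric.isOpen_iff.1 hS y hy
  let χ : ContDiffBump y := ⟨ε / 4, ε / 2, by positivity, by linarith⟩
  refine ⟨fun x => χ x • f x, ?_, ε / 4, by positivity, fun x hx => ?_⟩
  · refine contDiff_iff_contDiffAt.2 fun x => ?_
    by_cases hx : x ∈ tsupport fun x => χ x • f x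
    swap
    · exact contDiffAt_const.congr_of_eventuallyEq (notMem_tsupport_iff_eventuallyEq.1 hx)
    have hx2 : x ∈ tsupport χ := tsupport_smul_subset_left (χ : E → ℝ) f hx
    rw [χ.tsupport_eq] at hx2
    have hxS : x ∈ S := hεS (Metric.closedBall_subset_ball (by change ε / 2 < ε; linarith) hx2)
    exact χ.contDiff.contDiffAt.smul (hf.contDiffAt (hS.mem_nhds hxS))
  · change f x = χ x • f x
    rw [χ.one_of_mem_closedBall (Metric.ball_subset_closedBall hx), one_smul]

/-- If `φ` is smooth near `y` and left multiplication by `φ y` is invertible, then `φ` and a right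
inverse of `φ` agree near `y` with globally smooth maps. -/
theorem exists_global_frame_aux [CompleteSpace W] (M : W →L[ℝ] W →L[ℝ] W) (e : W) (φ : E → W)
    {S : Set E} (hS : IsOpen S) {y : E} (hy : y ∈ S)
    (hφ : ContDiffOn ℝ ∞ φ S) (h1 : M (φ y) = 1) :
    ∃ (U V : E → W), ContDiff ℝ ∞ U ∧ ContDiff ℝ ∞ V ∧ ∃ r > 0,
      Set.EqOn φ U (Metric.ball y r) ∧ ∀ x ∈ Metric.ball y r, M (U x) (V x) = e := by
  obtain ⟨U, hU, r, hr, hφU⟩ := exists_global_extension φ hS hy hφ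
  have hc : Continuous fun x => M (U x) := M.continuous.comp hU.continuous
  let S1 : Set E := (fun x => M (U x)) ⁻¹' {a | IsUnit a}
  have hS1 : IsOpen S1 := Units.isOpen.preimage hc
  have hy1 : y ∈ S1 := by
    change IsUnit (M (U y))
    rw [← hφU (Metric.mem_ball_self hr), h1]
    exact isUnit_one
  have hV0 : ContDiffOn ℝ ∞ (fun x => Ring.inverse (M (U x)) e) S1 := by
    intro x hx
    obtain ⟨u, hu⟩ : IsUnit (M (U x)) := hx
    have h2 : ContDiffAt ℝ ∞ Ring.inverse (M (U x)) := hu ▸ contDiffAt_ringInverse ℝ u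
    have h3 : ContDiffAt ℝ ∞ (fun x => Ring.inverse (M (U x))) x :=
      ContDiffAt.comp (g := Ring.inverse) (f := fun x => M (U x)) x h2
        (M.contDiff.comp hU).contDiffAt
    exact (h3.clm_apply contDiffAt_const).contDiffWithinAt
  obtain ⟨V, hV, r', hr', hVV⟩ := exists_global_extension _ hS1 hy1 hV0
  obtain ⟨ρ, hρ, hρS⟩ := Metric.isOpen_iff.1 hS1 y hy1
  refine ⟨U, V, hU, hV, min r (min r' ρ), by positivity,
    hφU.mono (Metric.ball_subset_ball (by simp)), fun x hx => ?_⟩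
  rw [← hVV (Metric.ball_subset_ball (by simp) hx)]
  have hx1 : IsUnit (M (U x)) := hρS (Metric.ball_subset_ball (by simp) hx)
  have := Ring.mul_inverse_cancel _ hx1
  exact congrArg (fun a : W →L[ℝ] W => a e) this

/-- A smooth germ of matrices equal to `1` at `y` agrees, on a ball around `y`, with a globally
smooth map having a globally smooth inverse on that ball. -/
theorem exists_global_frame {m : ℕ} (φ : E → Mat m) {S : Set E} (hS : IsOpen S) {y : E}
    (hy : y ∈ S) (hφ : ContDiffOn ℝ ∞ φ S) (h1 : φ y = 1) :
    ∃ (U V : E → Mat m), ContDiff ℝ ∞ U ∧ ContDiff ℝ ∞ V ∧ ∃ r > 0,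
      Set.EqOn φ U (Metric.ball y r) ∧ ∀ x ∈ Metric.ball y r, U x * V x = 1 :=
  exists_global_frame_aux (mulL m) 1 φ hS hy hφ (by
    rw [h1]; ext1 a; exact (mulL_apply 1 a).trans (one_mul a))

end frame

/-! ### Parallel transport along segments -/

section transport_generic

variable {W : Type} [NormedAddCommGroup W] [NormedSpace ℝ W]

theorem contDiff_lin {E : Type} [NormedAddCommGroup E] [NormedSpace ℝ E]
    (T : W →L[ℝ] W →L[ℝ] W) {f : E → W}
    (hf : ContDiff ℝ ∞ f) : ContDiff ℝ ∞ (fun x => T (f x)) := T.contDiff.comp hf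

theorem ode_reparam (C : ℝ → W →L[ℝ] W) (f : ℝ → W)
    (hf : ∀ s ∈ Set.Icc (0:ℝ) 1, HasDerivWithinAt f (C s (f s)) (Set.Icc (0:ℝ) 1) s) (a b : ℝ)
    (hab : ∀ s ∈ Set.Icc (0:ℝ) 1, a + s * b ∈ Set.Icc (0:ℝ) 1) :
    ∀ s ∈ Set.Icc (0:ℝ) 1, HasDerivWithinAt (fun s => f (a + s * b))
      ((b • C (a + s * b)) (f (a + s * b))) (Set.Icc (0:ℝ) 1) s := fun s hs => by
  have h1 : HasDerivWithinAt (fun s : ℝ => a + s * b) b (Set.Icc (0:ℝ) 1) s := by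
    simpa using (((hasDerivAt_id s).mul_const b).const_add a).hasDerivWithinAt
  exact (hf _ (hab s hs)).scomp s h1 hab

/-- The solutions of a linear equation are preserved by operators commuting with the generator. -/
theorem ode_map (C : ℝ → W →L[ℝ] W) (L : W →L[ℝ] W) (f : ℝ → W)
    (hf : ∀ s ∈ Set.Icc (0:ℝ) 1, HasDerivWithinAt f (C s (f s)) (Set.Icc (0:ℝ) 1) s)
    (hL : ∀ s w, L (C s w) = C s (L w)) :
    ∀ s ∈ Set.Icc (0:ℝ) 1, HasDerivWithinAt (fun s => L (f s))
      (C s (L (f s))) (Set.Icc (0:ℝ) 1) s := fun s hs => by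
  rw [← hL]
  exact L.hasFDerivAt.comp_hasDerivWithinAt s (hf s hs)

/-- If a smooth map agrees with a curve `f` along the segment from `y` to `x`, its derivative at `x`
in the direction `x - y` is the final velocity of `f`. -/
theorem fderiv_of_segment {E : Type} [NormedAddCommGroup E] [NormedSpace ℝ E] {U : E → W}
    (hU : ContDiff ℝ ∞ U) (x y : E) (f : ℝ → W) (f' : W)
    (hf : HasDerivWithinAt f f' (Set.Icc (0:ℝ) 1) 1)
    (h : ∀ t ∈ Set.Icc (0:ℝ) 1, U (y + t • (x - y)) = f t) : fderiv ℝ U x (x - y) = f' := by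
  have h1 : HasDerivAt (fun t : ℝ => y + t • (x - y)) (x - y) 1 := by
    simpa using ((hasDerivAt_id (1:ℝ)).smul_const (x - y)).const_add y
  have hx : y + (1:ℝ) • (x - y) = x := by simp
  have h2 : HasFDerivAt U (fderiv ℝ U x) (y + (1:ℝ) • (x - y)) := by
    rw [hx]; exact (hU.differentiable (by simp) x).hasFDerivAt
  have h3 := (h2.comp_hasDerivAt 1 h1).hasDerivWithinAt (s := Set.Icc (0:ℝ) 1)
  have h4 : HasDerivWithinAt (U ∘ fun t : ℝ => y + t • (x - y)) f' (Set.Icc (0:ℝ) 1) 1 :=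
    hf.congr (fun t ht => h t ht) (h 1 (by simp))
  exact (uniqueDiffOn_Icc one_pos 1 (by simp)).eq_deriv _ h3 h4

end transport_generic

section transport

variable {d m : ℕ}

/-- The generator `-(x - y)^μ B_μ(y + s(x - y))` of parallel transport along the segment from `y`
to `x`. -/
noncomputable def conn (B : Fin d → Vec d → Mat m) (y x : Vec d) (s : ℝ) : Mat m :=
  -(∑ μ, (x μ - y μ) • B μ (y + s • (x - y)))

/-- `P x y` is the path-ordered exponential along the segment from `y` to `x`. -/
structure IsTransport (B : Fin d → Vec d → Mat m) (P : Vec d → Vec d → ℝ → Mat m) : Prop where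
  zero : ∀ x y, P x y 0 = 1
  deriv : ∀ x y, ∀ s ∈ Set.Icc (0:ℝ) 1,
    HasDerivWithinAt (P x y) (mulL m (conn B y x s) (P x y s)) (Set.Icc (0:ℝ) 1) s

variable {B : Fin d → Vec d → Mat m} {P : Vec d → Vec d → ℝ → Mat m}

theorem contDiff_conn (hB : ∀ μ, ContDiff ℝ ∞ (B μ)) (y : Vec d) :
    ContDiff ℝ ∞ (fun p : Vec d × ℝ => conn B y p.1 p.2) := by
  have h1 : ∀ μ, ContDiff ℝ ∞ (fun p : Vec d × ℝ => p.1 μ - y μ) := fun μ =>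
    ((EuclideanSpace.proj μ : Vec d →L[ℝ] ℝ).contDiff.comp contDiff_fst).sub contDiff_const
  have h2 : ∀ μ, ContDiff ℝ ∞ (fun p : Vec d × ℝ => B μ (y + p.2 • (p.1 - y))) := fun μ =>
    (hB μ).comp (f := fun p : Vec d × ℝ => y + p.2 • (p.1 - y)) (by fun_prop)
  exact (ContDiff.sum fun μ _ => (h1 μ).smul (h2 μ)).neg

theorem continuous_mul_conn (hB : ∀ μ, ContDiff ℝ ∞ (B μ)) (x y : Vec d) :
    Continuous (fun s : ℝ => mulL m (conn B y x s)) :=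
  (mulL m).continuous.comp ((contDiff_conn hB y).continuous.comp
    (by fun_prop : Continuous fun s : ℝ => (x, s)))

/-- The generator along the subsegment from `z` to `w` of the segment from `y` to `x`. -/
theorem conn_reparam (B : Fin d → Vec d → Mat m) (x y z w : Vec d) (a b s : ℝ)
    (hz : z = y + a • (x - y)) (hw : w - z = b • (x - y)) :
    conn B z w s = b • conn B y x (a + s * b) := by
  have h1 : z + s • (w - z) = y + (a + s * b) • (x - y) := by
    rw [hw, hz, smul_smul, add_smul, add_assoc]
  have h2 : ∀ μ, w μ - z μ = b * (x μ - y μ) := fun μ => by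
    simpa using congrArg (fun u : Vec d => u μ) hw
  simp only [conn, h1, h2, smul_neg, Finset.smul_sum, smul_smul]

/-- Transport to an intermediate point. -/
theorem transport_partial (hB : ∀ μ, ContDiff ℝ ∞ (B μ)) (hP : IsTransport B P) (x y : Vec d)
    {t : ℝ} (ht : t ∈ Set.Icc (0:ℝ) 1) : P (y + t • (x - y)) y 1 = P x y t := by
  -- compare with `s ↦ P x y (s t)`
  have h1 := ode_reparam (fun s => mulL m (conn B y x s)) (P x y) (hP.deriv x y) 0 t
    fun s hs => ⟨by have := mul_nonneg hs.1 ht.1; linarith,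
      by have := mul_le_one₀ hs.2 ht.1 ht.2; linarith⟩
  have h2 := linear_ode_unique _ (continuous_mul_conn hB (y + t • (x - y)) y) _
    (fun s => P x y (0 + s * t)) (hP.deriv (y + t • (x - y)) y) (fun s hs => by
      have := h1 s hs
      rw [conn_reparam B x y y (y + t • (x - y)) 0 t s (by simp) (by simp), map_smul]
      exact this) (by simp [hP.zero])
  simpa using h2 (show (1:ℝ) ∈ Set.Icc (0:ℝ) 1 by simp)

/-- Composition of transports along collinear segments. -/
theorem transport_mul (hB : ∀ μ, ContDiff ℝ ∞ (B μ)) (hP : IsTransport B P) (x y : Vec d)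
    {t : ℝ} (ht : t ∈ Set.Icc (0:ℝ) 1) :
    P x (y + t • (x - y)) 1 * P (y + t • (x - y)) y 1 = P x y 1 := by
  rw [transport_partial hB hP x y ht]
  -- both `s ↦ P x z s * P x y t` and `s ↦ P x y (t + s (1 - t))` solve the transport equation
  -- from `z` to `x`, with the same initial value
  set z := y + t • (x - y) with hz
  have h1 := ode_reparam (fun s => mulL m (conn B y x s)) (P x y) (hP.deriv x y) t (1 - t)
    fun s hs => ⟨by have := mul_nonneg hs.1 (sub_nonneg.2 ht.2); linarith [ht.1],
      by have := mul_le_of_le_one_left (sub_nonneg.2 ht.2) hs.2; linarith⟩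
  have h3 := ode_map (fun s => mulL m (conn B z x s)) ((mulL m).flip (P x y t)) (P x z)
    (hP.deriv x z) (fun s w => mul_assoc _ _ _)
  have h2 := linear_ode_unique _ (continuous_mul_conn hB x z) _
    (fun s => P x y (t + s * (1 - t))) h3 (fun s hs => by
      have := h1 s hs
      rw [conn_reparam B x y z x t (1 - t) s hz (by rw [hz, sub_smul, one_smul]; abel), map_smul]
      exact this) (by
        change P x z 0 * P x y t = P x y (t + 0 * (1 - t))
        simp [hP.zero])
  have h4 : P x z 1 * P x y t = P x y (t + 1 * (1 - t)) :=
    h2 (show (1:ℝ) ∈ Set.Icc (0:ℝ) 1 by simp)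
  rw [h4]; congr 1; ring

theorem conn_self (y : Vec d) (s : ℝ) : conn B y y s = 0 := by simp [conn]

theorem transport_self (hB : ∀ μ, ContDiff ℝ ∞ (B μ)) (hP : IsTransport B P) (y : Vec d) :
    P y y 1 = 1 := by
  have h := transport_partial hB hP y y (t := 0) (by simp)
  simpa [hP.zero] using h

/-- Transport from `y` is smooth in the endpoint, near `y`. -/
theorem transport_contDiffOn (hB : ∀ μ, ContDiff ℝ ∞ (B μ)) (hP : IsTransport B P) (y : Vec d) :
    ∃ S, IsOpen S ∧ y ∈ S ∧ ContDiffOn ℝ ∞ (fun x => P x y 1) S :=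
  contDiffOn_linear_ode (fun p : Vec d × ℝ => mulL m (conn B y p.1 p.2))
    (contDiff_lin (mulL m) (contDiff_conn hB y)) y (fun s => by
      change mulL m (conn B y y s) = 0
      rw [conn_self, map_zero]) (fun x => P x y) 1
    (fun x => hP.zero x y) (fun x s hs => hP.deriv x y s hs)

/-- Parallel transport along rays from `y`, used as a gauge transformation, brings the connection
into radial (Fock-Schwinger) gauge. -/
theorem radial_gaugeB (hP : IsTransport B P) (hB : ∀ μ, ContDiff ℝ ∞ (B μ))
    {U V : Vec d → Mat m} (hU : ContDiff ℝ ∞ U) {y : Vec d} {r : ℝ}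
    (h : Set.EqOn (fun x => P x y 1) U (Metric.ball y r)) :
    Set.EqOn (radial y (gaugeB B U V)) (fun _ => 0) (Metric.ball y r) := fun x hx => by
  have hseg : ∀ t ∈ Set.Icc (0:ℝ) 1, y + t • (x - y) ∈ Metric.ball y r := fun t ht => by
    rw [Metric.mem_ball, dist_eq_norm] at hx ⊢
    rw [add_sub_cancel_left, norm_smul, Real.norm_of_nonneg ht.1]
    exact (mul_le_of_le_one_left (norm_nonneg _) ht.2).trans_lt hx
  have h1 : fderiv ℝ U x (x - y) = conn B y x 1 * P x y 1 :=
    fderiv_of_segment hU x y (P x y) _ (hP.deriv x y 1 (by simp)) fun t ht => by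
      rw [← h (hseg t ht)]; exact transport_partial hB hP x y ht
  have h2 : x - y = ∑ μ, (x μ - y μ) • EuclideanSpace.single μ (1:ℝ) := by
    ext i; simp [Pi.single_apply]
  have h3 : fderiv ℝ U x (x - y) = ∑ μ, (x μ - y μ) • pd μ U x := by
    conv_lhs => rw [h2]
    rw [map_sum]
    exact Finset.sum_congr rfl fun μ _ => map_smul _ _ _
  have h4 : P x y 1 = U x := h hx
  have h5 : radial y (gaugeB B U V) x =
      V x * (∑ μ, (x μ - y μ) • pd μ U x + (∑ μ, (x μ - y μ) • B μ x) * U x) := by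
    simp only [radial, gaugeB, covD, pd, Finset.sum_mul, ← Finset.sum_add_distrib, Finset.mul_sum]
    simp only [Matrix.mul_smul, Matrix.smul_mul, smul_add, mul_add]
  have h6 : conn B y x 1 = -∑ μ, (x μ - y μ) • B μ x := by simp [conn]
  rw [h5, ← h3, h1, h4, h6]
  simp

end transport

/-! ### Evaluation at the base point of a radial gauge -/

section origin

variable {d m : ℕ} {y : Vec d} {S : Set (Vec d)} {b : Fin d → Vec d → Mat m} {u : Vec d → Mat m}

/-- The source `-A 1` of the recursion in the gauge `b`:
`Σ_μ (∂_μ b_μ + b_μ²) + u`, for the potential `u`. -/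
noncomputable def source (b : Fin d → Vec d → Mat m) (u : Vec d → Mat m) : Vec d → Mat m :=
  fun x => ∑ μ, (pd μ (b μ) x + b μ x * b μ x) + u x

theorem contDiff_source (hb : ∀ μ, ContDiff ℝ ∞ (b μ)) (hu : ContDiff ℝ ∞ u) :
    ContDiff ℝ ∞ (source b u) :=
  (ContDiff.sum fun μ _ => (contDiff_pd (hb μ) μ).add ((hb μ).mat_mul (hb μ))).add hu

theorem lapA_one (b : Fin d → Vec d → Mat m) (u : Vec d → Mat m) (x : Vec d) :
    lapA b u (fun _ => 1) x = -source b u x := by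
  have h1 : ∀ μ, covD b μ (fun _ => 1) = b μ := fun μ => funext fun x => by
    change pd μ (fun _ => (1 : Mat m)) x + b μ x * 1 = b μ x
    rw [pd_const, mul_one, zero_add]
  simp only [lapA, h1, mul_one]
  change -∑ μ, (pd μ (b μ) x + b μ x * b μ x) - u x = -source b u x
  rw [source, neg_add, sub_eq_add_neg]

theorem pd_diag (hS : IsOpen S) (hy : y ∈ S) (hb : ∀ μ, ContDiff ℝ ∞ (b μ))
    (h0 : Set.EqOn (radial y b) (fun _ => 0) S) (μ : Fin d) : pd μ (b μ) y = 0 := by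
  have h := radial_two hS hy hb h0 μ μ
  rw [← two_smul ℝ] at h
  exact (smul_eq_zero.1 h).resolve_left two_ne_zero

theorem source_base (hS : IsOpen S) (hy : y ∈ S) (hb : ∀ μ, ContDiff ℝ ∞ (b μ))
    (h0 : Set.EqOn (radial y b) (fun _ => 0) S) : source b u y = u y := by
  simp [source, pd_diag hS hy hb h0, radial_one hS hy hb h0]

/-- At the base point of a radial gauge, `A` is the flat operator. -/
theorem lapA_base (hS : IsOpen S) (hy : y ∈ S) (hb : ∀ μ, ContDiff ℝ ∞ (b μ))
    (h0 : Set.EqOn (radial y b) (fun _ => 0) S) {h : Vec d → Mat m} (hh : ContDiff ℝ ∞ h) :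
    lapA b u h y = -∑ μ, pd μ (pd μ h) y - u y * h y := by
  have h1 : ∀ μ, covD b μ (covD b μ h) y = pd μ (pd μ h) y := fun μ => by
    change pd μ (fun x => pd μ h x + b μ x * h x) y + b μ y * covD b μ h y = _
    rw [pd_add (contDiff_pd hh μ) ((hb μ).mat_mul hh), pd_mul (hb μ) hh,
      pd_diag hS hy hb h0, radial_one hS hy hb h0]
    simp
  simp only [lapA, h1]

/-- At the base point of a radial gauge, the adjoint covariant Laplacian is the flat one. -/
theorem nab_base (hS : IsOpen S) (hy : y ∈ S) (hb : ∀ μ, ContDiff ℝ ∞ (b μ))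
    (h0 : Set.EqOn (radial y b) (fun _ => 0) S) (hu : ContDiff ℝ ∞ u) (μ : Fin d) :
    nab b μ (nab b μ u) y = pd μ (pd μ u) y := by
  change pd μ (fun x => pd μ u x + (b μ x * u x - u x * b μ x)) y
    + (b μ y * nab b μ u y - nab b μ u y * b μ y) = _
  rw [pd_add (contDiff_pd hu μ) (((hb μ).mat_mul hu).sub (hu.mat_mul (hb μ))),
    pd_sub ((hb μ).mat_mul hu) (hu.mat_mul (hb μ)), pd_mul (hb μ) hu, pd_mul hu (hb μ),
    pd_diag hS hy hb h0, radial_one hS hy hb h0]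
  simp

/-- At the base point of a radial gauge, `F_{μν} = 2 ∂_μ b_ν`. -/
theorem Fstr_base (hS : IsOpen S) (hy : y ∈ S) (hb : ∀ μ, ContDiff ℝ ∞ (b μ))
    (h0 : Set.EqOn (radial y b) (fun _ => 0) S) (μ ν : Fin d) :
    Fstr b μ ν y = (2:ℝ) • pd μ (b ν) y := by
  have h := radial_two hS hy hb h0 μ ν
  rw [Fstr, radial_one hS hy hb h0, radial_one hS hy hb h0, two_smul,
    eq_neg_of_add_eq_zero_right h]
  simp

/-- The flat Laplacian of the source at the base point: the terms `∂∂∂b` cancel by `radial_four`, and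
`∂_μ ∂_μ (b_ν b_ν) = 2 (∂_μ b_ν)²` because `b` vanishes there. -/
theorem laplace_source (hS : IsOpen S) (hy : y ∈ S) (hb : ∀ μ, ContDiff ℝ ∞ (b μ))
    (h0 : Set.EqOn (radial y b) (fun _ => 0) S) (hu : ContDiff ℝ ∞ u) :
    ∑ μ, pd μ (pd μ (source b u)) y = (1/2:ℝ) • ∑ μ, ∑ ν, Fstr b μ ν y * Fstr b μ ν y
      + ∑ μ, pd μ (pd μ u) y := by
  have hp : ∀ {f : Vec d → Mat m}, ContDiff ℝ ∞ f → ∀ κ, ContDiff ℝ ∞ (pd κ f) :=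
    fun hf κ => contDiff_pd hf κ
  have h1 : ∀ μ ν, pd μ (pd μ (fun x => b ν x * b ν x)) y =
      (1/2:ℝ) • (Fstr b μ ν y * Fstr b μ ν y) := by
    intro μ ν
    have e : pd μ (fun x => b ν x * b ν x) = fun x => pd μ (b ν) x * b ν x + b ν x * pd μ (b ν) x :=
      funext fun x => pd_mul (hb ν) (hb ν) x
    have hq := hp (hb ν) μ
    rw [e, pd_add (hq.mat_mul (hb ν)) ((hb ν).mat_mul hq), pd_mul hq (hb ν), pd_mul (hb ν) hq,
      radial_one hS hy hb h0, Fstr_base hS hy hb h0, Matrix.smul_mul, Matrix.mul_smul, smul_smul,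
      smul_smul]
    rw [mul_zero, zero_mul, zero_add, add_zero, ← two_smul ℝ]
    norm_num
  have hbb : ∀ ν, ContDiff ℝ ∞ (fun x => b ν x * b ν x) := fun ν => (hb ν).mat_mul (hb ν)
  have hs : ∀ ν, ContDiff ℝ ∞ (fun x => pd ν (b ν) x + b ν x * b ν x) := fun ν =>
    (hp (hb ν) ν).add (hbb ν)
  have h2 : ∀ μ, pd μ (pd μ (source b u)) y = ∑ ν, (pd μ (pd μ (pd ν (b ν))) y
      + (1/2:ℝ) • (Fstr b μ ν y * Fstr b μ ν y)) + pd μ (pd μ u) y := by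
    intro μ
    have e : pd μ (source b u) = fun x => ∑ ν, (pd μ (pd ν (b ν)) x
        + pd μ (fun x => b ν x * b ν x) x) + pd μ u x := funext fun x => by
      refine (pd_add (ContDiff.sum fun ν _ => hs ν) hu x).trans ?_
      rw [pd_sum hs]
      exact congrArg (· + _) (Finset.sum_congr rfl fun ν _ => pd_add (hp (hb ν) ν) (hbb ν) x)
    rw [e, pd_add (ContDiff.sum fun ν _ => (hp (hp (hb ν) ν) μ).add (hp (hbb ν) μ)) (hp hu μ),
      pd_sum fun ν => (hp (hp (hb ν) ν) μ).add (hp (hbb ν) μ)]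
    refine congrArg (· + _) (Finset.sum_congr rfl fun ν _ => ?_)
    rw [pd_add (hp (hp (hb ν) ν) μ) (hp (hbb ν) μ), h1]
  simp only [h2, Finset.sum_add_distrib, radial_four hS hy hb h0, zero_add, Finset.smul_sum]

/-- Each derivative raises the weight in the average, which leaves `∫₀¹ s² ds = 1/3`. -/
theorem laplace_avg {w : Vec d → Mat m} (hw : ContDiff ℝ ∞ w) (y : Vec d) (μ : Fin d) :
    pd μ (pd μ (avg y 0 w)) y = (1/3:ℝ) • pd μ (pd μ w) y := by
  have h1 : ∀ k {w : Vec d → Mat m}, ContDiff ℝ ∞ w →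
      pd μ (avg y k w) = avg y (k + 1) (pd μ w) := fun k w hw =>
    funext fun x => fderiv_avg y k hw x _
  rw [h1 0 hw, h1 1 (contDiff_pd hw μ), avg_base]
  norm_num

theorem lapA_avg_source (hS : IsOpen S) (hy : y ∈ S) (hb : ∀ μ, ContDiff ℝ ∞ (b μ))
    (h0 : Set.EqOn (radial y b) (fun _ => 0) S) (hu : ContDiff ℝ ∞ u) :
    -lapA b u (avg y 0 (source b u)) y = u y * u y
      + (1/6:ℝ) • ∑ μ, ∑ ν, Fstr b μ ν y * Fstr b μ ν y
      + (1/3:ℝ) • ∑ μ, nab b μ (nab b μ u) y := by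
  have hw := contDiff_source hb hu
  have h1 : avg y 0 (source b u) y = u y := by
    rw [avg_base, source_base hS hy hb h0]; norm_num
  rw [lapA_base hS hy hb h0 (contDiff_avg y 0 hw), h1]
  simp only [laplace_avg hw, nab_base hS hy hb h0 hu]
  rw [← Finset.smul_sum, laplace_source hS hy hb h0 hu, smul_add, smul_smul]
  norm_num
  abel

end origin

/-! ### The coefficients -/

theorem integral_map_avg {E W : Type} [NormedAddCommGroup E] [NormedSpace ℝ E]
    [NormedAddCommGroup W] [NormedSpace ℝ W] [CompleteSpace W] (L : W →L[ℝ] W) (y : E) (k : ℕ)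
    {w : E → W} (hw : ContDiff ℝ ∞ w) (x : E) :
    -∫ s in (0:ℝ)..1, -(L (s ^ k • w (y + s • (x - y)))) = L (avg y k w x) := by
  rw [intervalIntegral.integral_neg, neg_neg]
  refine L.intervalIntegral_comp_comm (Continuous.intervalIntegrable ?_ _ _)
  have := hw.continuous
  fun_prop

section coefficients

variable {d m : ℕ} {B : Fin d → Vec d → Mat m} {v : Vec d → Mat m} {Φ : Vec d → Vec d → Mat m}

/-- On the diagonal the integrand of the recursion depends on `s` only through its weight. -/
theorem acoef_succ_diag (hΦ : ∀ y, Φ y y = 1) (k : ℕ) (y : Vec d) :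
    acoef B v Φ (k + 1) y y =
      -((1 / ((k:ℝ) + 1)) • lapA B v (fun x => acoef B v Φ k x y) y) := by
  have h : acoef B v Φ (k + 1) y y = -∫ s in (0:ℝ)..1, s ^ k •
      (Φ y (y + s • (y - y)) * lapA B v (fun x => acoef B v Φ k x y) (y + s • (y - y))) := rfl
  simp only [h, sub_self, smul_zero, add_zero, hΦ, one_mul]
  rw [intervalIntegral.integral_smul_const, integral_pow]
  simp

/-- In the frame `U = Φ(·, y)` the first coefficient is the average of the source over the segment
from `y`. -/
theorem acoef_one_gauge (hv : ContDiff ℝ ∞ v) (hB : ∀ μ, ContDiff ℝ ∞ (B μ)) {U V : Vec d → Mat m}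
    (hU : ContDiff ℝ ∞ U) (hV : ContDiff ℝ ∞ V) {y : Vec d} {r : ℝ}
    (hΦU : Set.EqOn (fun x => Φ x y) U (Metric.ball y r))
    (hUV : ∀ x ∈ Metric.ball y r, U x * V x = 1)
    (hcomp : ∀ x, ∀ t ∈ Set.Icc (0:ℝ) 1, Φ x (y + t • (x - y)) * Φ (y + t • (x - y)) y = Φ x y) :
    Set.EqOn (fun x => acoef B v Φ 1 x y)
      (fun x => U x * avg y 0 (source (gaugeB B U V) (gaugeAd U V v)) x) (Metric.ball y r) :=
  fun x hx => by
  have h1 : Set.EqOn (lapA B v (fun x => Φ x y))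
      (fun x => U x * -source (gaugeB B U V) (gaugeAd U V v) x) (Metric.ball y r) := by
    have h := lapA_gauge (v := v) Metric.isOpen_ball hB hU hV hUV (h := fun _ => 1) contDiff_const
      (f := fun x => Φ x y) (fun x hx => by simpa using hΦU hx)
    simpa only [lapA_one] using h
  have hΦx : Φ x y = U x := hΦU hx
  have h2 : acoef B v Φ 1 x y = -∫ s in (0:ℝ)..1,
      -(mulL m (U x) (s ^ 0 • source (gaugeB B U V) (gaugeAd U V v) (y + s • (x - y)))) := by
    refine congrArg Neg.neg (intervalIntegral.integral_congr fun s hs => ?_)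
    rw [Set.uIcc_of_le zero_le_one] at hs
    have hz : y + s • (x - y) ∈ Metric.ball y r := by
      rw [Metric.mem_ball, dist_eq_norm] at hx ⊢
      rw [add_sub_cancel_left, norm_smul, Real.norm_of_nonneg hs.1]
      exact (mul_le_of_le_one_left (norm_nonneg _) hs.2).trans_lt hx
    have h3 := h1 hz
    have h4 : Φ (y + s • (x - y)) y = U (y + s • (x - y)) := hΦU hz
    change s ^ 0 • (Φ x (y + s • (x - y)) * lapA B v (fun x => Φ x y) (y + s • (x - y))) =
      -(U x * (s ^ 0 • source (gaugeB B U V) (gaugeAd U V v) (y + s • (x - y))))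
    rw [h3]
    simp only [pow_zero, one_smul]
    rw [← mul_assoc, ← h4, hcomp x s hs, hΦx, mul_neg]
  refine h2.trans (integral_map_avg (mulL m (U x)) y 0 ?_ x)
  exact contDiff_source (contDiff_gaugeB hB hU hV) (contDiff_gaugeAd hv hU hV)

/-- The first two diagonal coefficients, for a `Φ` which is parallel transport for `B`. -/
theorem acoef_diag_one_two (hB : ∀ μ, ContDiff ℝ ∞ (B μ)) (hv : ContDiff ℝ ∞ v)
    {P : Vec d → Vec d → ℝ → Mat m} (hP : IsTransport B P) (hΦ : ∀ x y, Φ x y = P x y 1)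
    (y : Vec d) :
    acoef B v Φ 1 y y = v y ∧
      acoef B v Φ 2 y y = (1/2 : ℝ) • (v y * v y)
          + (1/12 : ℝ) • ∑ μ, ∑ ν, Fstr B μ ν y * Fstr B μ ν y
          + (1/6 : ℝ) • ∑ μ, nab B μ (nab B μ v) y := by
  have hdiag : ∀ y, Φ y y = 1 := fun y => (hΦ y y).trans (transport_self hB hP y)
  have hcomp : ∀ x, ∀ t ∈ Set.Icc (0:ℝ) 1,
      Φ x (y + t • (x - y)) * Φ (y + t • (x - y)) y = Φ x y := fun x t ht => by
    simp only [hΦ]; exact transport_mul hB hP x y ht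
  obtain ⟨T, hT, hyT, hφ⟩ := transport_contDiffOn hB hP y
  obtain ⟨U, V, hU, hV, r, hr, hPU, hUV⟩ :=
    exists_global_frame (fun x => P x y 1) hT hyT hφ (transport_self hB hP y)
  have hΦU : Set.EqOn (fun x => Φ x y) U (Metric.ball y r) := fun x hx =>
    (hΦ x y).trans (hPU hx)
  have h0 := radial_gaugeB hP hB (V := V) hU hPU
  have hb := contDiff_gaugeB hB hU hV
  have hu := contDiff_gaugeAd hv hU hV
  have hS : IsOpen (Metric.ball y r) := Metric.isOpen_ball
  have hy : y ∈ Metric.ball y r := Metric.mem_ball_self hr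
  have hUy : U y = 1 := (hΦU hy).symm.trans (hdiag y)
  have h1 := acoef_one_gauge hv hB hU hV hΦU hUV hcomp
  have e1 : gaugeAd U V v y = v y := by
    have h : v y * U y = U y * gaugeAd U V v y := mul_gaugeAd hUV hy
    rw [hUy, mul_one, one_mul] at h
    exact h.symm
  have e2 : ∀ μ ν, Fstr (gaugeB B U V) μ ν y = Fstr B μ ν y := fun μ ν => by
    have h := Fstr_gauge (μ := μ) (ν := ν) hS hB hU hV hUV hy
    rw [hUy, mul_one, one_mul] at h
    exact h.symm
  have e3 : ∀ μ, nab (gaugeB B U V) μ (nab (gaugeB B U V) μ (gaugeAd U V v)) y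
      = nab B μ (nab B μ v) y := fun μ => by
    have h := nab_gauge (μ := μ) (B := B) hS hU hUV (contDiff_nab (hB μ) hv)
      (contDiff_nab (hb μ) hu) (nab_gauge hS hU hUV hv hu (mul_gaugeAd hUV)) hy
    change nab B μ (nab B μ v) y * U y = U y * _ at h
    rw [hUy, mul_one, one_mul] at h
    exact h.symm
  constructor
  · have h : acoef B v Φ 1 y y = U y * avg y 0 (source (gaugeB B U V) (gaugeAd U V v)) y := h1 hy
    rw [h, hUy, one_mul, avg_base, source_base hS hy hb h0, e1]
    norm_num
  · have h := lapA_gauge (v := v) hS hB hU hV hUV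
      (contDiff_avg y 0 (contDiff_source hb hu)) h1 hy
    change lapA B v (fun x => acoef B v Φ 1 x y) y = U y * lapA _ _ _ y at h
    have h2 := lapA_avg_source hS hy hb h0 hu
    rw [hUy, one_mul] at h
    rw [← h, e1] at h2
    simp only [e2, e3] at h2
    have h3 : acoef B v Φ 2 y y = (1/2:ℝ) • -lapA B v (fun x => acoef B v Φ 1 x y) y := by
      refine (acoef_succ_diag hdiag 1 y).trans ?_
      rw [smul_neg]; norm_num
    rw [h3, h2, smul_add, smul_add, smul_smul, smul_smul]
    norm_num

end coefficients

theorem first_two_diagonal_heat_kernel_coefficients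
    (d m : ℕ) (hd : 0 < d) (hm : 0 < m)
    (B : Fin d → EuclideanSpace ℝ (Fin d) → Matrix (Fin m) (Fin m) ℂ)
    (hB : ∀ μ, ContDiff ℝ (⊤ : ℕ∞) (B μ))
    (v : EuclideanSpace ℝ (Fin d) → Matrix (Fin m) (Fin m) ℂ)
    (hv : ContDiff ℝ (⊤ : ℕ∞) v)
    (P : EuclideanSpace ℝ (Fin d) → EuclideanSpace ℝ (Fin d) → ℝ →
      Matrix (Fin m) (Fin m) ℂ)
    (hP0 : ∀ x y, P x y 0 = 1)
    (hP : ∀ x y, ∀ s ∈ Set.Icc (0:ℝ) 1, HasDerivWithinAt (P x y)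
      (-(∑ μ, (x μ - y μ) • B μ (y + s • (x - y))) * P x y s) (Set.Icc (0:ℝ) 1) s)
    (Φ : EuclideanSpace ℝ (Fin d) → EuclideanSpace ℝ (Fin d) →
      Matrix (Fin m) (Fin m) ℂ)
    (hΦ : ∀ x y, Φ x y = P x y 1) :
    ∀ x,
      acoef B v Φ 1 x x = v x ∧
      acoef B v Φ 2 x x =
        (1/2 : ℝ) • (v x * v x)
          + (1/12 : ℝ) • ∑ μ, ∑ ν, Fstr B μ ν x * Fstr B μ ν x
          + (1/6 : ℝ) • ∑ μ, nab B μ (nab B μ v) x := by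
  exact acoef_diag_one_two hB hv ⟨hP0, hP⟩ hΦ
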